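/- Let g : ℝ^n × ℝ^m → ℝ be differentiable, μ-strongly convex in x and μ-strongly concave in y, and have L₁-Lipschitz gradient: ‖∇g(z₁) − ∇g(z₂)‖₂ ≤ L₁‖z₁ − z₂‖₂ for all z₁, z₂. Define the merit function m(z) = (1/2)‖∇g(z)‖₂² and the duality gap G(x,y) = sup_{y' ∈ ℝ^m} g(x,y') − inf_{x' ∈ ℝ^n} g(x',y). Then for every z = (x,y) ∈ ℝ^n × ℝ^m, (μ/L₁²)·m(z) ≤ G(x,y) ≤ (L₁/μ²)·m(z). -/

import Mathlib

open scoped RealInnerProductSpace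

/-- Partial gradient in the first (minimization) variable. -/
noncomputable def gradX {n m : ℕ}
    (g : EuclideanSpace ℝ (Fin n) × EuclideanSpace ℝ (Fin m) → ℝ)
    (x : EuclideanSpace ℝ (Fin n)) (y : EuclideanSpace ℝ (Fin m)) :
    EuclideanSpace ℝ (Fin n) :=
  gradient (fun x' => g (x', y)) x

/-- Partial gradient in the second (maximization) variable. -/
noncomputable def gradY {n m : ℕ}
    (g : EuclideanSpace ℝ (Fin n) × EuclideanSpace ℝ (Fin m) → ℝ)
    (x : EuclideanSpace ℝ (Fin n)) (y : EuclideanSpace ℝ (Fin m)) :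
    EuclideanSpace ℝ (Fin m) :=
  gradient (fun y' => g (x, y')) y

/-!
With `f = g(·, y)` and `h = -g(x, ·)`, the duality gap splits as
`G(x, y) = (f x - inf f) + (h y - inf h)`, and each summand is the suboptimality of a strongly
convex function with Lipschitz gradient. Minimizing its quadratic lower model of curvature `μ` and
its quadratic upper model of curvature `L` pins the suboptimality between `‖∇f‖² / (2L)` and
`‖∇f‖² / (2μ)`, so `m / L ≤ G ≤ m / μ`. The stated constants are weaker because `μ ≤ L` as soon as
some gradient is nonzero.
-/

open scoped NNReal

section OneVariable

variable {E : Type*} [NormedAddCommGroup E] [InnerProductSpace ℝ E]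

/-- Strong monotonicity of a vector field with modulus `c`. For a gradient field this is `c`-strong
convexity of the potential. The modulus may be negative: modulus `-L` for `-F` bounds the curvature
of a potential of `F` from above by `L`. -/
def StronglyMonotoneWith (c : ℝ) (F : E → E) : Prop :=
  ∀ x y, c * ‖x - y‖ ^ 2 ≤ ⟪F x - F y, x - y⟫

theorem stronglyMonotoneWith_neg_of_lipschitzWith {K : ℝ≥0} {F : E → E} (hF : LipschitzWith K F) :
    StronglyMonotoneWith (-K) (-F) := fun x y => by
  have hinner : ⟪F x - F y, x - y⟫ ≤ K * ‖x - y‖ ^ 2 :=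
    calc ⟪F x - F y, x - y⟫ ≤ ‖F x - F y‖ * ‖x - y‖ := real_inner_le_norm _ _
      _ ≤ K * ‖x - y‖ * ‖x - y‖ := by gcongr; exact hF.norm_sub_le x y
      _ = K * ‖x - y‖ ^ 2 := by ring
  rw [Pi.neg_apply, Pi.neg_apply, ← neg_sub', inner_neg_left]
  linarith

namespace StronglyMonotoneWith

variable {c μ : ℝ} {K : ℝ≥0} {F : E → E}

theorem inner_add_mul_le_inner (hF : StronglyMonotoneWith c F) (x v : E) {t : ℝ} (ht : 0 ≤ t) :
    ⟪F x, v⟫ + c * ‖v‖ ^ 2 * t ≤ ⟪F (x + t • v), v⟫ := by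
  obtain rfl | ht := ht.eq_or_lt
  · simp
  have hmono := hF (x + t • v) x
  rw [add_sub_cancel_left, inner_smul_right, norm_smul, inner_sub_left, mul_pow,
    Real.norm_eq_abs, sq_abs] at hmono
  nlinarith

theorem mul_norm_sq_le_of_lipschitzWith (hF : StronglyMonotoneWith μ F) (hK : LipschitzWith K F)
    (v : E) : μ * ‖v‖ ^ 2 ≤ K * ‖v‖ ^ 2 := by
  have hlower := hF v 0
  have hupper := stronglyMonotoneWith_neg_of_lipschitzWith hK v 0
  simp only [sub_zero, Pi.neg_apply, ← neg_sub', inner_neg_left] at hlower hupper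
  linarith

end StronglyMonotoneWith

variable [CompleteSpace E] {c μ : ℝ} {K : ℝ≥0} {f : E → ℝ} {f' : E → E}

theorem hasGradientAt_neg {g : E} {x : E} (hf : HasGradientAt f g x) :
    HasGradientAt (-f) (-g) x := by
  rw [hasGradientAt_iff_hasFDerivAt, map_neg]
  exact hf.hasFDerivAt.neg

theorem hasDerivAt_comp_add_smul {g x v : E} {t : ℝ} (hf : HasGradientAt f g (x + t • v)) :
    HasDerivAt (fun s : ℝ => f (x + s • v)) ⟪g, v⟫ t := by
  have hline : HasDerivAt (fun s : ℝ => x + s • v) v t := by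
    simpa using ((hasDerivAt_id t).smul_const v).const_add x
  simpa [Function.comp_def] using hf.hasFDerivAt.comp_hasDerivAt t hline

namespace StronglyMonotoneWith

theorem quadratic_model_le (hmono : StronglyMonotoneWith c f') (hf : ∀ x, HasGradientAt f (f' x) x)
    (x v : E) : f x + ⟪f' x, v⟫ + c / 2 * ‖v‖ ^ 2 ≤ f (x + v) := by
  have hmodel (t : ℝ) :
      HasDerivAt (fun s => f x + ⟪f' x, v⟫ * s + c / 2 * ‖v‖ ^ 2 * s ^ 2)
        (⟪f' x, v⟫ + c * ‖v‖ ^ 2 * t) t :=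
    ((((hasDerivAt_id t).const_mul ⟪f' x, v⟫).const_add (f x)).add
      ((hasDerivAt_pow 2 t).const_mul (c / 2 * ‖v‖ ^ 2))).congr_deriv (by push_cast; ring)
  have hsegment (t : ℝ) := hasDerivAt_comp_add_smul (hf (x + t • v))
  have hle := image_le_of_deriv_right_le_deriv_boundary
    (fun t _ => (hmodel t).continuousAt.continuousWithinAt)
    (fun t _ => (hmodel t).hasDerivWithinAt) (by simp)
    (fun t _ => (hsegment t).continuousAt.continuousWithinAt)
    (fun t _ => (hsegment t).hasDerivWithinAt)
    (fun t ht => hmono.inner_add_mul_le_inner x v ht.1) (Set.right_mem_Icc.2 zero_le_one)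
  simpa using hle

theorem sub_norm_sq_div_le (hmono : StronglyMonotoneWith μ f') (hμ : 0 < μ)
    (hf : ∀ x, HasGradientAt f (f' x) x) (x y : E) : f x - ‖f' x‖ ^ 2 / (2 * μ) ≤ f y := by
  have hmodel := hmono.quadratic_model_le hf x (y - x)
  rw [add_sub_cancel] at hmodel
  have hsq : 0 ≤ ‖f' x + μ • (y - x)‖ ^ 2 / (2 * μ) := by positivity
  have hexpand : ‖f' x + μ • (y - x)‖ ^ 2 / (2 * μ) =
      ‖f' x‖ ^ 2 / (2 * μ) + ⟪f' x, y - x⟫ + μ / 2 * ‖y - x‖ ^ 2 := by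
    rw [norm_add_sq_real, inner_smul_right, norm_smul, mul_pow, Real.norm_eq_abs, sq_abs]
    field_simp
  linarith

theorem bddBelow_range (hmono : StronglyMonotoneWith μ f') (hμ : 0 < μ)
    (hf : ∀ x, HasGradientAt f (f' x) x) : BddBelow (Set.range f) :=
  ⟨f 0 - ‖f' 0‖ ^ 2 / (2 * μ), Set.forall_mem_range.2 (hmono.sub_norm_sq_div_le hμ hf 0)⟩

theorem sub_iInf_le (hmono : StronglyMonotoneWith μ f') (hμ : 0 < μ)
    (hf : ∀ x, HasGradientAt f (f' x) x) (x : E) : f x - ⨅ z, f z ≤ ‖f' x‖ ^ 2 / (2 * μ) :=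
  sub_le_comm.1 (le_ciInf (hmono.sub_norm_sq_div_le hμ hf x))

end StronglyMonotoneWith

theorem le_quadratic_model_of_lipschitzWith (hK : LipschitzWith K f')
    (hf : ∀ x, HasGradientAt f (f' x) x) (x v : E) :
    f (x + v) ≤ f x + ⟪f' x, v⟫ + K / 2 * ‖v‖ ^ 2 := by
  have hneg := (stronglyMonotoneWith_neg_of_lipschitzWith hK).quadratic_model_le
    (fun z => hasGradientAt_neg (hf z)) x v
  simp only [Pi.neg_apply, inner_neg_left] at hneg
  linarith

theorem norm_sq_div_le_sub_iInf (hK : LipschitzWith K f') (hK₀ : 0 < K)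
    (hf : ∀ x, HasGradientAt f (f' x) x) (hbdd : BddBelow (Set.range f)) (x : E) :
    ‖f' x‖ ^ 2 / (2 * K) ≤ f x - ⨅ z, f z := by
  refine le_sub_comm.1 ?_
  calc ⨅ z, f z ≤ f (x + (-(K : ℝ)⁻¹) • f' x) := ciInf_le hbdd _
    _ ≤ f x + ⟪f' x, (-(K : ℝ)⁻¹) • f' x⟫ + K / 2 * ‖(-(K : ℝ)⁻¹) • f' x‖ ^ 2 :=
      le_quadratic_model_of_lipschitzWith hK hf x _
    _ = f x - ‖f' x‖ ^ 2 / (2 * K) := by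
      rw [inner_smul_right, norm_smul, real_inner_self_eq_norm_sq, mul_pow, Real.norm_eq_abs,
        sq_abs]
      field_simp
      ring

end OneVariable

section DualityGap

variable {X Y : Type*}

/-- The duality gap `G(x, y)` of the min-max problem for `g`, minimizing over the first variable.
The supremum and infimum are real-valued, hence `0` when they diverge. -/
noncomputable def dualityGap (g : X × Y → ℝ) (x : X) (y : Y) : ℝ :=
  (⨆ y', g (x, y')) - ⨅ x', g (x', y)

theorem dualityGap_eq_add (g : X × Y → ℝ) (x : X) (y : Y) :
    dualityGap g x y =
      (g (x, y) - ⨅ x', g (x', y)) + (-g (x, y) - ⨅ y', -g (x, y')) := by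
  have hneg : ⨅ y', -g (x, y') = -⨆ y', g (x, y') := by
    rw [iSup, ← Real.sInf_neg, ← Set.image_neg_eq_neg, ← Set.range_comp]
    rfl
  rw [dualityGap, hneg]
  ring

end DualityGap

section MeritFunction

variable {E F : Type*} [NormedAddCommGroup E] [NormedAddCommGroup F]

/-- The merit function `m = ‖∇g‖² / 2` that measures stationarity of `g` at `(x, y)`. It takes the
partial gradients `gx` and `gy` of `g`, since the norm on `E × F` is not Euclidean. -/
noncomputable def meritFunction (gx : E → F → E) (gy : E → F → F) (x : E) (y : F) : ℝ :=
  1 / 2 * (‖gx x y‖ ^ 2 + ‖gy x y‖ ^ 2)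

theorem meritFunction_div (gx : E → F → E) (gy : E → F → F) (x : E) (y : F) (c : ℝ) :
    meritFunction gx gy x y / c = ‖gx x y‖ ^ 2 / (2 * c) + ‖gy x y‖ ^ 2 / (2 * c) := by
  rw [meritFunction]
  ring

theorem lipschitzWith_left_of_sqrt_le {K : ℝ≥0} {gx : E → F → E} {gy : E → F → F}
    (h : ∀ x₁ y₁ x₂ y₂,
      √(‖gx x₁ y₁ - gx x₂ y₂‖ ^ 2 + ‖gy x₁ y₁ - gy x₂ y₂‖ ^ 2)
        ≤ K * √(‖x₁ - x₂‖ ^ 2 + ‖y₁ - y₂‖ ^ 2)) (y : F) :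
    LipschitzWith K (gx · y) :=
  .of_dist_le_mul fun x₁ x₂ => by
    rw [dist_eq_norm, dist_eq_norm]
    calc ‖gx x₁ y - gx x₂ y‖ ≤ √(‖gx x₁ y - gx x₂ y‖ ^ 2 + ‖gy x₁ y - gy x₂ y‖ ^ 2) :=
          Real.le_sqrt_of_sq_le (le_add_of_nonneg_right (sq_nonneg _))
      _ ≤ K * ‖x₁ - x₂‖ := by simpa using h x₁ y x₂ y

theorem lipschitzWith_right_of_sqrt_le {K : ℝ≥0} {gx : E → F → E} {gy : E → F → F}
    (h : ∀ x₁ y₁ x₂ y₂,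
      √(‖gx x₁ y₁ - gx x₂ y₂‖ ^ 2 + ‖gy x₁ y₁ - gy x₂ y₂‖ ^ 2)
        ≤ K * √(‖x₁ - x₂‖ ^ 2 + ‖y₁ - y₂‖ ^ 2)) (x : E) :
    LipschitzWith K (gy x) :=
  lipschitzWith_left_of_sqrt_le (gx := fun y x => gy x y) (gy := fun y x => gx x y)
    (fun y₁ x₁ y₂ x₂ => by simpa only [add_comm] using h x₁ y₁ x₂ y₂) x

variable [InnerProductSpace ℝ E] [InnerProductSpace ℝ F]

theorem mul_meritFunction_le {μ : ℝ} {K : ℝ≥0} {gx : E → F → E} {gy : E → F → F} {x : E} {y : F}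
    (hconv : StronglyMonotoneWith μ (gx · y)) (hconc : StronglyMonotoneWith μ (-gy x ·))
    (hx : LipschitzWith K (gx · y)) (hy : LipschitzWith K (gy x)) :
    μ * meritFunction gx gy x y ≤ K * meritFunction gx gy x y := by
  have hX := hconv.mul_norm_sq_le_of_lipschitzWith hx (gx x y)
  have hY := hconc.mul_norm_sq_le_of_lipschitzWith hy.neg (gy x y)
  rw [meritFunction]
  linarith

theorem merit_function_duality_gap_bounds_general [CompleteSpace E] [CompleteSpace F]
    {g : E × F → ℝ} {gx : E → F → E} {gy : E → F → F} {μ : ℝ} {K : ℝ≥0} (hμ : 0 < μ) (hK : 0 < K)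
    (hgx : ∀ x y, HasGradientAt (fun x' => g (x', y)) (gx x y) x)
    (hgy : ∀ x y, HasGradientAt (fun y' => g (x, y')) (gy x y) y)
    (hconv : ∀ y, StronglyMonotoneWith μ (gx · y))
    (hconc : ∀ x, StronglyMonotoneWith μ (-gy x ·))
    (hLipx : ∀ y, LipschitzWith K (gx · y)) (hLipy : ∀ x, LipschitzWith K (gy x)) (x : E) (y : F) :
    μ / K ^ 2 * meritFunction gx gy x y ≤ meritFunction gx gy x y / K ∧
      meritFunction gx gy x y / K ≤ dualityGap g x y ∧
      dualityGap g x y ≤ meritFunction gx gy x y / μ ∧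
      meritFunction gx gy x y / μ ≤ K / μ ^ 2 * meritFunction gx gy x y := by
  have hμK := mul_meritFunction_le (hconv y) (hconc x) (hLipx y) (hLipy x)
  have hfx (x' : E) := hgx x' y
  have hfy (y' : F) := hasGradientAt_neg (hgy x y')
  have lower_x := norm_sq_div_le_sub_iInf (hLipx y) hK hfx ((hconv y).bddBelow_range hμ hfx) x
  have lower_y := norm_sq_div_le_sub_iInf (hLipy x).neg hK hfy ((hconc x).bddBelow_range hμ hfy) y
  have upper_x := (hconv y).sub_iInf_le hμ hfx x
  have upper_y := (hconc x).sub_iInf_le hμ hfy y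
  simp only [Pi.neg_apply, norm_neg] at lower_y upper_y
  rw [dualityGap_eq_add]
  refine ⟨?_, ?_, ?_, ?_⟩
  · calc μ / K ^ 2 * meritFunction gx gy x y = μ * meritFunction gx gy x y / K ^ 2 := by ring
      _ ≤ K * meritFunction gx gy x y / K ^ 2 := by gcongr
      _ = meritFunction gx gy x y / K := by field_simp
  · rw [meritFunction_div]
    exact add_le_add lower_x lower_y
  · rw [meritFunction_div]
    exact add_le_add upper_x upper_y
  · calc meritFunction gx gy x y / μ = μ * meritFunction gx gy x y / μ ^ 2 := by field_simp
      _ ≤ K * meritFunction gx gy x y / μ ^ 2 := by gcongr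
      _ = K / μ ^ 2 * meritFunction gx gy x y := by ring

end MeritFunction

/-- Proposition 1 of the paper: for a differentiable, `μ`-strongly-convex–strongly-concave
function `g` with `L₁`-Lipschitz gradient, the merit function `m(z) = (1/2)‖∇g(z)‖²` and the
duality gap `G(x,y) = sup_{y'} g(x,y') − inf_{x'} g(x',y)` satisfy
`(μ/L₁²) m(z) ≤ G(x,y) ≤ (L₁/μ²) m(z)`. -/
theorem merit_function_duality_gap_bounds {n m : ℕ}
    (g : EuclideanSpace ℝ (Fin n) × EuclideanSpace ℝ (Fin m) → ℝ)
    (μ L₁ : ℝ) (hμ : 0 < μ) (hL₁ : 0 < L₁)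
    (hg : Differentiable ℝ g)
    (hconv : ∀ x₁ x₂ y, ⟪gradX g x₁ y - gradX g x₂ y, x₁ - x₂⟫ ≥ μ * ‖x₁ - x₂‖ ^ 2)
    (hconc : ∀ x y₁ y₂, ⟪-gradY g x y₁ + gradY g x y₂, y₁ - y₂⟫ ≥ μ * ‖y₁ - y₂‖ ^ 2)
    (hLip : ∀ x₁ y₁ x₂ y₂,
      Real.sqrt (‖gradX g x₁ y₁ - gradX g x₂ y₂‖ ^ 2 + ‖gradY g x₁ y₁ - gradY g x₂ y₂‖ ^ 2)
        ≤ L₁ * Real.sqrt (‖x₁ - x₂‖ ^ 2 + ‖y₁ - y₂‖ ^ 2)) :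
    ∀ x y,
      μ / L₁ ^ 2 * (1 / 2 * (‖gradX g x y‖ ^ 2 + ‖gradY g x y‖ ^ 2))
          ≤ (⨆ y', g (x, y')) - (⨅ x', g (x', y)) ∧
      (⨆ y', g (x, y')) - (⨅ x', g (x', y))
          ≤ L₁ / μ ^ 2 * (1 / 2 * (‖gradX g x y‖ ^ 2 + ‖gradY g x y‖ ^ 2)) := by
  intro x y
  lift L₁ to ℝ≥0 using hL₁.le
  obtain ⟨coarse_lower, lower, upper, coarse_upper⟩ :=
    merit_function_duality_gap_bounds_general (gx := gradX g) (gy := gradY g) hμ hL₁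
      (fun x y => DifferentiableAt.hasGradientAt (by fun_prop))
      (fun x y => DifferentiableAt.hasGradientAt (by fun_prop))
      (fun y x₁ x₂ => hconv x₁ x₂ y)
      (fun x y₁ y₂ => (hconc x y₁ y₂).trans_eq (by rw [sub_neg_eq_add]))
      (lipschitzWith_left_of_sqrt_le hLip) (lipschitzWith_right_of_sqrt_le hLip) x y
  exact ⟨coarse_lower.trans lower, upper.trans coarse_upper⟩
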